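/- arXiv:1606.08085 — 6 statements merged into one kernel-verified Lean document; each statement's English description precedes it below -/
import Mathlib

section
/- Let N ≥ 1 and let F ∈ ℂ^{N×N} be the DFT matrix with entries F_{m,n} = e^{−2πi·mn/N}/√N. Let K and M be natural numbers with 2K ≤ M ≤ N. If x, x′ ∈ ℂ^N each have at most K nonzero entries and (Fx)_m = (Fx′)_m for every 0 ≤ m ≤ M−1, then x = x′. (Hence a K-sparse graph signal on the vertices of an undirected circulant graph is perfectly determined by its dimensionality-reduced GFT representation y = U_M^H x consisting of the first M ≥ 2K rows of the permuted GFT basis, which is the DFT matrix.) -/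
/-! The difference `x - x'` is supported on at most `2K` indices. On that support, the first `2K`
DFT samples are the power moments `∑ₙ (xₙ - x'ₙ) (ωⁿ)ᵐ` at the distinct nodes `ωⁿ`, up to a nonzero
scalar, and as many power moments as nodes determine the weights because the Vandermonde matrix is
nonsingular. -/

section PowerMoments

variable {ι R : Type*} [CommRing R] [IsDomain R]

theorem eq_zero_of_forall_lt_card_sum_mul_pow_eq_zero {s : Finset ι} {v w : ι → R}
    (hv : Set.InjOn v s) (h : ∀ m < s.card, ∑ i ∈ s, w i * v i ^ m = 0) : ∀ i ∈ s, w i = 0 := by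
  let e := s.equivFin.symm
  have hinj : Function.Injective fun k => v (e k) := hv.injective.comp e.injective
  have hw : (fun k => w (e k)) = 0 :=
    Matrix.eq_zero_of_forall_pow_sum_mul_pow_eq_zero hinj fun m => by
      rw [e.sum_comp fun i : s => w i * v i ^ (m : ℕ), s.sum_coe_sort fun i => w i * v i ^ (m : ℕ)]
      exact h m m.isLt
  intro i hi
  simpa [e] using congrFun hw (s.equivFin ⟨i, hi⟩)

variable [Fintype ι] [DecidableEq R] {v : ι → R}

theorem eq_zero_of_forall_lt_hammingNorm_sum_mul_pow_eq_zero (hv : Function.Injective v)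
    {x : ι → R} (h : ∀ m < hammingNorm x, ∑ i, x i * v i ^ m = 0) : x = 0 := by
  have hsupp : ∀ i ∈ Finset.univ.filter (x · ≠ 0), x i = 0 :=
    eq_zero_of_forall_lt_card_sum_mul_pow_eq_zero hv.injOn fun m hm => by
      rw [Finset.sum_filter_of_ne fun i _ hi => left_ne_zero_of_mul hi]
      exact h m hm
  funext i
  by_contra hi
  exact hi (hsupp i (by simpa using hi))

theorem eq_of_forall_lt_hammingDist_sum_mul_pow_eq (hv : Function.Injective v) {x x' : ι → R}
    (h : ∀ m < hammingDist x x', ∑ i, x i * v i ^ m = ∑ i, x' i * v i ^ m) : x = x' := by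
  rw [hammingDist_comm, hammingDist_eq_hammingNorm, neg_add_eq_sub] at h
  refine sub_eq_zero.mp (eq_zero_of_forall_lt_hammingNorm_sum_mul_pow_eq_zero hv fun m hm => ?_)
  simp only [Pi.sub_apply, sub_mul, Finset.sum_sub_distrib, h m hm, sub_self]

end PowerMoments

theorem hammingDist_le_hammingNorm_add_hammingNorm {ι : Type*} {β : ι → Type*} [Fintype ι]
    [∀ i, DecidableEq (β i)] [∀ i, Zero (β i)] (x y : ∀ i, β i) :
    hammingDist x y ≤ hammingNorm x + hammingNorm y := by
  simpa only [hammingDist_zero_right, hammingDist_zero_left] using hammingDist_triangle x 0 y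

theorem dft_sparse_recovery_general {R : Type*} [CommRing R] [IsDomain R] [DecidableEq R] {N : ℕ}
    {ω c : R} (hω : IsPrimitiveRoot ω N) (hc : c ≠ 0) {F : Matrix (Fin N) (Fin N) R}
    (hF : ∀ m n : Fin N, F m n = c * ω ^ ((m : ℕ) * n)) {M : ℕ} {x x' : Fin N → R}
    (hM : hammingNorm x + hammingNorm x' ≤ M)
    (hsamp : ∀ m : Fin N, (m : ℕ) < M → F.mulVec x m = F.mulVec x' m) : x = x' := by
  have hnodes : Function.Injective fun n : Fin N => ω ^ (n : ℕ) := fun i j hij =>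
    Fin.ext (hω.pow_inj i.isLt j.isLt hij)
  have hmoment (y : Fin N → R) (m : Fin N) :
      F.mulVec y m = c * ∑ n : Fin N, y n * (ω ^ (n : ℕ)) ^ (m : ℕ) := by
    rw [Matrix.mulVec, dotProduct, Finset.mul_sum]
    exact Finset.sum_congr rfl fun n _ => by rw [hF]; ring
  refine eq_of_forall_lt_hammingDist_sum_mul_pow_eq hnodes fun m hm => ?_
  have hmN : m < N := by simpa using hm.trans_le hammingDist_le_card_fintype
  have hmM : m < M :=
    hm.trans_le ((hammingDist_le_hammingNorm_add_hammingNorm x x').trans hM)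
  apply mul_left_cancel₀ hc
  rw [← hmoment x ⟨m, hmN⟩, ← hmoment x' ⟨m, hmN⟩, hsamp ⟨m, hmN⟩ hmM]

theorem exp_neg_two_pi_I_mul_div_eq_inv_pow (N m n : ℕ) :
    Complex.exp (-2 * (Real.pi : ℂ) * Complex.I * (m : ℂ) * (n : ℂ) / (N : ℂ)) =
      (Complex.exp (2 * Real.pi * Complex.I / N))⁻¹ ^ (m * n) := by
  rw [← Complex.exp_neg, ← Complex.exp_nat_mul]
  push_cast
  ring_nf

/-- A K-sparse signal on a circulant graph is determined by the first
M ≥ 2K entries of its GFT (DFT) representation. -/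
theorem dft_sparse_recovery (N : ℕ) (hN : 1 ≤ N)
    (F : Matrix (Fin N) (Fin N) ℂ)
    (hF : ∀ m n : Fin N, F m n =
      Complex.exp (-2 * (Real.pi : ℂ) * Complex.I * ((m : ℕ) : ℂ) * ((n : ℕ) : ℂ) / (N : ℂ))
        / ((Real.sqrt N : ℝ) : ℂ))
    (K M : ℕ) (hKM : 2 * K ≤ M) (hMN : M ≤ N)
    (x x' : Fin N → ℂ)
    (hx : (Finset.univ.filter fun i => x i ≠ 0).card ≤ K)
    (hx' : (Finset.univ.filter fun i => x' i ≠ 0).card ≤ K)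
    (hsamp : ∀ m : Fin N, (m : ℕ) < M → F.mulVec x m = F.mulVec x' m) :
    x = x' := by
  have hN0 : N ≠ 0 := Nat.one_le_iff_ne_zero.mp hN
  have hscale : ((Real.sqrt N : ℝ) : ℂ)⁻¹ ≠ 0 := by simpa using hN0
  exact dft_sparse_recovery_general (Complex.isPrimitiveRoot_exp N hN0).inv hscale
    (fun m n => by rw [hF, exp_neg_two_pi_I_mul_div_eq_inv_pow, div_eq_inv_mul])
    ((add_le_add hx hx').trans (by omega)) hsamp
end

section
/- Let A be the adjacency matrix of an undirected circulant graph on N vertices with generating set S, positive weights (d_s)_{s∈S}, degree d per node and bandwidth B satisfying 2B < N, and let L = d·I_N − A be its graph Laplacian. Then the representer polynomial of L has two vanishing moments: for all a, b ∈ ℝ, the polynomial graph signal x ∈ ℝ^N with x_j = a + b·j (j = 0,…,N−1) satisfies (L x)_i = 0 for every index i with B ≤ i ≤ N−1−B; that is, L annihilates polynomial graph signals of degree at most 1 up to a border effect determined by the bandwidth B. -/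
/-- The symmetric circulant adjacency matrix of the circulant graph on `N` vertices
with generating set `S` and weights `w`. -/
noncomputable def circAdj (N : ℕ) (S : Finset ℕ) (w : ℕ → ℝ) :
    Matrix (Fin N) (Fin N) ℝ :=
  fun i j => ∑ s ∈ S,
    if ((i : ℤ) - (j : ℤ)) % (N : ℤ) = (s : ℤ) % (N : ℤ) ∨
       ((i : ℤ) - (j : ℤ)) % (N : ℤ) = (-(s : ℤ)) % (N : ℤ)
    then w s else 0

/-!
The matrix `circulant (Pi.single s 1)` is the cyclic shift by `s`, so the adjacency matrix is the
Laurent polynomial `∑ s ∈ S, w s • (Pˢ + P⁻ˢ)` in the unit shift `P` (the representer polynomial),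
and the Laplacian is a weighted sum of cyclic second differences `2 x i - x (i - s) - x (i + s)`.
An affine signal has zero second differences wherever `i - s` and `i + s` do not wrap around, which
is guaranteed at distance at least the bandwidth from the border.
-/

section CyclicDifferences

open Matrix
open scoped Fin.CommRing

theorem circulant_single_one_mulVec_apply {G R : Type*} [AddCommGroup G] [Fintype G]
    [DecidableEq G] [NonAssocSemiring R] (g : G) (x : G → R) (i : G) :
    (circulant (Pi.single g (1 : R)) *ᵥ x) i = x (i - g) := by
  have sub_eq_iff (j : G) : i - j = g ↔ i - g = j := sub_eq_iff_eq_add'.trans sub_eq_iff_eq_add.symm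
  simp only [mulVec, dotProduct, circulant_apply, Pi.single_apply, sub_eq_iff, ite_mul, one_mul,
    zero_mul, Finset.sum_ite_eq, Finset.mem_univ, if_true]

variable {N : ℕ} [NeZero N]

theorem val_sub_val_emod_eq_iff (i j : Fin N) (k : ℤ) :
    ((i : ℤ) - (j : ℤ)) % (N : ℤ) = k % (N : ℤ) ↔ i - j = (k : Fin N) := by
  have cast_sub : (((i : ℤ) - (j : ℤ) : ℤ) : Fin N) = i - j := by simp
  rw [← cast_sub, CharP.intCast_eq_intCast (Fin N) N, Int.ModEq]

theorem natCast_ne_neg_natCast {s : ℕ} (hs : ¬N ∣ 2 * s) : (s : Fin N) ≠ -(s : Fin N) := by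
  rw [Ne, eq_neg_iff_add_eq_zero, ← two_mul]
  exact_mod_cast (CharP.cast_eq_zero_iff (Fin N) N (2 * s)).not.mpr hs

theorem circAdj_eq_sum_circulant {S : Finset ℕ} (w : ℕ → ℝ) (hS : ∀ s ∈ S, ¬N ∣ 2 * s) :
    circAdj N S w = ∑ s ∈ S, w s •
      (circulant (Pi.single (s : Fin N) 1) + circulant (Pi.single (-(s : Fin N)) 1)) := by
  ext i j
  simp only [circAdj, Matrix.sum_apply, Matrix.smul_apply, Matrix.add_apply, circulant_apply,
    Pi.single_apply, smul_eq_mul, val_sub_val_emod_eq_iff, Int.cast_neg, Int.cast_natCast]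
  refine Finset.sum_congr rfl fun s hs ↦ ?_
  have ne_neg := natCast_ne_neg_natCast (hS s hs)
  by_cases hpos : i - j = s
  · simp [hpos, ne_neg]
  · simp [hpos]

/-- The graph Laplacian `d • 1 - A` of the circulant graph with adjacency matrix
`A = circAdj N S w`. Here `d = ∑ s ∈ S, 2 * w s` is the degree of every vertex only if `s` and `-s`
are distinct modulo `N` for each `s ∈ S`. -/
noncomputable def circLaplacian (N : ℕ) (S : Finset ℕ) (w : ℕ → ℝ) : Matrix (Fin N) (Fin N) ℝ :=
  (∑ s ∈ S, 2 * w s) • (1 : Matrix (Fin N) (Fin N) ℝ) - circAdj N S w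

theorem circLaplacian_mulVec_apply {S : Finset ℕ} (w : ℕ → ℝ) (hS : ∀ s ∈ S, ¬N ∣ 2 * s)
    (x : Fin N → ℝ) (i : Fin N) :
    (circLaplacian N S w *ᵥ x) i = ∑ s ∈ S, w s * (2 * x i - x (i - s) - x (i + s)) := by
  rw [circLaplacian, circAdj_eq_sum_circulant w hS]
  simp only [sub_mulVec, smul_mulVec, one_mulVec, sum_mulVec, add_mulVec, Pi.sub_apply,
    Pi.add_apply, Pi.smul_apply, Finset.sum_apply, smul_eq_mul, circulant_single_one_mulVec_apply,
    sub_neg_eq_add]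
  rw [Finset.sum_mul, ← Finset.sum_sub_distrib]
  exact Finset.sum_congr rfl fun s _ ↦ by ring

theorem val_sub_natCast {i : Fin N} {s : ℕ} (hs : s ≤ (i : ℕ)) :
    ((i - (s : Fin N) : Fin N) : ℕ) = i - s := by
  have hval : ((s : Fin N) : ℕ) = s := Fin.val_cast_of_lt (hs.trans_lt i.isLt)
  rw [Fin.sub_val_of_le (Fin.le_def.mpr (hval.trans_le hs)), hval]

theorem val_add_natCast {i : Fin N} {s : ℕ} (hs : (i : ℕ) + s < N) :
    ((i + (s : Fin N) : Fin N) : ℕ) = i + s := by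
  have hval : ((s : Fin N) : ℕ) = s := Fin.val_cast_of_lt (by lia)
  rw [Fin.val_add_eq_of_add_lt (by rwa [hval]), hval]

theorem cyclic_second_difference_affine_eq_zero {R : Type*} [CommRing R] (a b : R)
    {i : Fin N} {s : ℕ} (hlow : s ≤ (i : ℕ)) (hhigh : (i : ℕ) + s < N) :
    2 * (a + b * (i : ℕ)) - (a + b * ((i - (s : Fin N) : Fin N) : ℕ))
      - (a + b * ((i + (s : Fin N) : Fin N) : ℕ)) = 0 := by
  rw [val_sub_natCast hlow, val_add_natCast hhigh]
  push_cast [Nat.cast_sub hlow]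
  ring

end CyclicDifferences

theorem circulant_laplacian_two_vanishing_moments_general
    {N : ℕ} {S : Finset ℕ} (w : ℕ → ℝ) (hS : ∀ s ∈ S, 1 ≤ s) {B : ℕ} (hB : ∀ s ∈ S, s ≤ B)
    (a b : ℝ) (i : Fin N) (hlow : B ≤ (i : ℕ)) (hhigh : (i : ℕ) + B < N) :
    (circLaplacian N S w).mulVec (fun j ↦ a + b * (j : ℕ)) i = 0 := by
  have : NeZero N := .of_pos i.pos
  have hdvd : ∀ s ∈ S, ¬N ∣ 2 * s := fun s hs ↦
    Nat.not_dvd_of_pos_of_lt (by grind) (by grind)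
  rw [circLaplacian_mulVec_apply w hdvd]
  refine Finset.sum_eq_zero fun s hs ↦ ?_
  rw [cyclic_second_difference_affine_eq_zero a b ((hB s hs).trans hlow) (by grind), mul_zero]

/-- the circulant graph Laplacian has two vanishing moments: it annihilates
polynomial graph signals of degree at most 1, up to a border effect of size the bandwidth. -/
theorem circulant_laplacian_two_vanishing_moments
    (N : ℕ) (S : Finset ℕ) (w : ℕ → ℝ)
    (hS : ∀ s ∈ S, 1 ≤ s ∧ 2 * s ≤ N - 1)
    (hw : ∀ s ∈ S, 0 < w s)
    (B : ℕ) (hBS : B ∈ S) (hBmax : ∀ s ∈ S, s ≤ B) (hBN : 2 * B < N)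
    (A : Matrix (Fin N) (Fin N) ℝ) (hA : A = circAdj N S w)
    (L : Matrix (Fin N) (Fin N) ℝ)
    (hL : L = (∑ s ∈ S, 2 * w s) • (1 : Matrix (Fin N) (Fin N) ℝ) - A)
    (a b : ℝ) (x : Fin N → ℝ) (hx : ∀ j : Fin N, x j = a + b * (j : ℕ))
    (i : Fin N) (hi1 : B ≤ (i : ℕ)) (hi2 : (i : ℕ) ≤ N - 1 - B) :
    L.mulVec x i = 0 := by
  obtain rfl : x = fun j : Fin N ↦ a + b * (j : ℕ) := funext hx
  subst hA hL
  exact circulant_laplacian_two_vanishing_moments_general w (fun s hs ↦ (hS s hs).1) hBmax a b i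
    hi1 (by lia)
end

section
/- Let A be the adjacency matrix of an undirected circulant graph on N vertices with generating set S, positive weights (d_s)_{s∈S}, and bandwidth B satisfying 2B < N. For α ∈ ℝ let L̃_α = d̃_α·I_N − A be the e-graph Laplacian, where d̃_α = Σ_{s∈S} 2d_s cos(αs). Then L̃_α has two vanishing exponential moments: for every c ∈ ℂ and either sign choice, the complex exponential graph signal x ∈ ℂ^N with x_j = c·e^{±iαj} (j = 0,…,N−1) satisfies (L̃_α x)_i = 0 for every index i with B ≤ i ≤ N−1−B; that is, L̃_α annihilates complex exponential graph signals with exponent ±iα up to a border effect determined by the bandwidth B. -/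
/-!
A row of the adjacency matrix at distance at least `B` from both ends does not wrap around, so
there `A` acts as the convolution `x ↦ ∑ s, d_s (x (i - s) + x (i + s))`. On an exponential signal
of frequency `β = ±α` the bracket is `2 cos (β s) x i`. As the cosine is even, the sum of these
multiples is the exponential degree `d̃_α` for both signs, and `d̃_α I - A` vanishes on such rows.
-/

open Complex
open scoped Matrix

theorem int_modEq_iff_eq_of_abs_sub_lt {a b n : ℤ} (h : |a - b| < n) :
    a ≡ b [ZMOD n] ↔ a = b := by
  refine ⟨fun hab => ?_, fun hab => hab ▸ Int.ModEq.rfl⟩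
  exact sub_eq_zero.mp (Int.eq_zero_of_abs_lt_dvd hab.symm.dvd h)

theorem sub_modEq_or_modEq_neg_iff_of_interior {N s : ℕ} {i : Fin N} (hsi : s ≤ i)
    (hiN : (i : ℕ) + s < N) (j : Fin N) :
    ((i : ℤ) - j ≡ s [ZMOD N] ∨ (i : ℤ) - j ≡ -s [ZMOD N]) ↔
      j = ⟨i - s, by omega⟩ ∨ j = ⟨i + s, hiN⟩ := by
  rw [int_modEq_iff_eq_of_abs_sub_lt (by rw [abs_lt]; omega),
    int_modEq_iff_eq_of_abs_sub_lt (by rw [abs_lt]; omega), Fin.ext_iff, Fin.ext_iff]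
  dsimp only
  omega

theorem circAdj_apply_of_interior {N : ℕ} {S : Finset ℕ} (w : ℕ → ℝ) {i : Fin N}
    (hS : ∀ s ∈ S, s ≤ i ∧ (i : ℕ) + s < N) (j : Fin N) :
    circAdj N S w i j =
      ∑ s ∈ S, if (j : ℕ) = i - s ∨ (j : ℕ) = i + s then w s else 0 := by
  refine Finset.sum_congr rfl fun s hs => ?_
  obtain ⟨hsi, hiN⟩ := hS s hs
  have hiff := sub_modEq_or_modEq_neg_iff_of_interior hsi hiN j
  simp only [Int.ModEq, Fin.ext_iff] at hiff
  simp only [hiff]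

theorem sum_ite_eq_sub_or_eq_add_mul {R : Type*} [NonAssocSemiring R] {N s : ℕ} (hs : 0 < s)
    {i : Fin N} (hiN : (i : ℕ) + s < N) (r : R) (f : ℕ → R) :
    ∑ j : Fin N, (if (j : ℕ) = i - s ∨ (j : ℕ) = i + s then r else 0) * f j =
      r * (f (i - s) + f (i + s)) := by
  rw [Fintype.sum_eq_add (⟨i - s, by omega⟩ : Fin N) ⟨i + s, hiN⟩]
  · simp [mul_add]
  · rw [Ne, Fin.mk.injEq]
    omega
  · rintro j ⟨hj₁, hj₂⟩
    rw [if_neg (not_or.mpr ⟨Fin.val_ne_of_ne hj₁, Fin.val_ne_of_ne hj₂⟩), zero_mul]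

theorem circAdj_map_mulVec_of_interior {R : Type*} [NonAssocSemiring R] (φ : ℝ →+* R) {N : ℕ}
    {S : Finset ℕ} (w : ℕ → ℝ) {i : Fin N} (hS : ∀ s ∈ S, 0 < s ∧ s ≤ i ∧ (i : ℕ) + s < N)
    (f : ℕ → R) :
    ((circAdj N S w).map φ *ᵥ fun j => f j) i = ∑ s ∈ S, φ (w s) * (f (i - s) + f (i + s)) := by
  simp only [Matrix.mulVec, dotProduct, Matrix.map_apply,
    circAdj_apply_of_interior w fun s hs => (hS s hs).2, map_sum, apply_ite φ, map_zero,
    Finset.sum_mul]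
  rw [Finset.sum_comm]
  exact Finset.sum_congr rfl fun s hs =>
    sum_ite_eq_sub_or_eq_add_mul (hS s hs).1 (hS s hs).2.2 (φ (w s)) f

/-- The exponential degree `d̃_α = ∑ s ∈ S, 2 d_s cos (α s)`, with weights `d = w`. A complex
exponent `α` is allowed, so that real and damped exponential signals are covered as well. -/
noncomputable def expDegree (S : Finset ℕ) (w : ℕ → ℝ) (α : ℂ) : ℂ :=
  ∑ s ∈ S, 2 * w s * cos (α * s)

/-- The e-graph Laplacian `L̃_α = d̃_α I - A` of the circulant graph with generating set `S` and
weights `w`, as a complex matrix acting on complex graph signals. -/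
noncomputable def eGraphLaplacian (N : ℕ) (S : Finset ℕ) (w : ℕ → ℝ) (α : ℂ) :
    Matrix (Fin N) (Fin N) ℂ :=
  expDegree S w α • 1 - (circAdj N S w).map ofReal

theorem eGraphLaplacian_mulVec_of_interior {N : ℕ} {S : Finset ℕ} (w : ℕ → ℝ) (α : ℂ)
    {i : Fin N} (hS : ∀ s ∈ S, 0 < s ∧ s ≤ i ∧ (i : ℕ) + s < N) (f : ℕ → ℂ) :
    (eGraphLaplacian N S w α *ᵥ fun j => f j) i =
      ∑ s ∈ S, w s * (2 * cos (α * s) * f i - (f (i - s) + f (i + s))) := by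
  have hA : ((circAdj N S w).map ofReal *ᵥ fun j => f j) i =
      ∑ s ∈ S, w s * (f (i - s) + f (i + s)) := circAdj_map_mulVec_of_interior ofRealHom w hS f
  rw [eGraphLaplacian, Matrix.sub_mulVec, Matrix.smul_mulVec, Matrix.one_mulVec, Pi.sub_apply,
    Pi.smul_apply, smul_eq_mul, hA, expDegree, Finset.sum_mul, ← Finset.sum_sub_distrib]
  refine Finset.sum_congr rfl fun s _ => ?_
  ring

theorem exp_I_mul_sub_add_exp_I_mul_add (z w : ℂ) :
    exp (I * (z - w)) + exp (I * (z + w)) = 2 * cos w * exp (I * z) := by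
  rw [two_cos, add_mul, ← exp_add, ← exp_add, add_comm]
  ring_nf

theorem e_graph_laplacian_two_vanishing_exponential_moments_general
    {N : ℕ} {S : Finset ℕ} (w : ℕ → ℝ) {B : ℕ} (hS : ∀ s ∈ S, 0 < s ∧ s ≤ B) (α c : ℂ) {ε : ℂ}
    (hε : ε = 1 ∨ ε = -1) {i : Fin N} (hBi : B ≤ i) (hiN : (i : ℕ) + B < N) :
    (eGraphLaplacian N S w α *ᵥ fun j => c * exp (I * (ε * α * (j : ℕ)))) i = 0 := by
  have hinterior : ∀ s ∈ S, 0 < s ∧ s ≤ i ∧ (i : ℕ) + s < N := fun s hs => by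
    have := hS s hs
    omega
  rw [eGraphLaplacian_mulVec_of_interior w α hinterior fun n => c * exp (I * (ε * α * n))]
  refine Finset.sum_eq_zero fun s hs => ?_
  have hcos : cos (ε * α * s) = cos (α * s) := by
    rcases hε with rfl | rfl <;> simp
  have hexp := exp_I_mul_sub_add_exp_I_mul_add (ε * α * (i : ℕ)) (ε * α * s)
  rw [← mul_sub, ← mul_add, hcos] at hexp
  rw [Nat.cast_sub (hinterior s hs).2.1, Nat.cast_add, ← mul_add c, hexp]
  ring

/-- the e-graph Laplacian `L̃_α = d̃_α I − A` has two vanishing exponential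
moments: it annihilates complex exponential graph signals `x j = c e^{±iαj}` up to a border
effect of size the bandwidth `B`. -/
theorem e_graph_laplacian_two_vanishing_exponential_moments
    (N : ℕ) (S : Finset ℕ) (w : ℕ → ℝ)
    (hS : ∀ s ∈ S, 1 ≤ s ∧ 2 * s ≤ N - 1)
    (hw : ∀ s ∈ S, 0 < w s)
    (B : ℕ) (hBS : B ∈ S) (hBmax : ∀ s ∈ S, s ≤ B) (hBN : 2 * B < N)
    (A : Matrix (Fin N) (Fin N) ℝ) (hA : A = circAdj N S w)
    (α : ℝ)
    (Lt : Matrix (Fin N) (Fin N) ℂ)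
    (hLt : Lt = ((∑ s ∈ S, 2 * w s * Real.cos (α * s) : ℝ) : ℂ) •
        (1 : Matrix (Fin N) (Fin N) ℂ) - A.map Complex.ofReal)
    (c : ℂ) (ε : ℝ) (hε : ε = 1 ∨ ε = -1)
    (x : Fin N → ℂ)
    (hx : ∀ j : Fin N, x j = c * Complex.exp (Complex.I * ((ε * α * (j : ℕ) : ℝ) : ℂ)))
    (i : Fin N) (hi1 : B ≤ (i : ℕ)) (hi2 : (i : ℕ) ≤ N - 1 - B) :
    Lt.mulVec x i = 0 := by
  subst hA hLt
  obtain rfl := funext hx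
  simpa [eGraphLaplacian, expDegree] using
    e_graph_laplacian_two_vanishing_exponential_moments_general w
      (fun s hs => ⟨(hS s hs).1, hBmax s hs⟩) α c (ε := ε) (mod_cast hε) hi1 (by omega)
end

section
/- Let A be the adjacency matrix of an undirected, connected circulant graph on N vertices with generating set S (connectedness being equivalent to gcd(S ∪ {N}) = 1), positive weights (d_s)_{s∈S} and degree d per node, let k ≥ 1, and let H_LP = (1/2^k)(I_N + A/d)^k and H_HP = (1/2^k)(I_N − A/d)^k be the HGSWT filters of order 2k. Then for every diagonal downsampling matrix K with diagonal entries in {+1,−1} having at least one entry equal to +1 (a node retaining the low-pass component) and at least one entry equal to −1 (the complementary set of nodes retaining the high-pass components), the one-level filterbank matrix W = (1/2)(I_N + K)·H_LP + (1/2)(I_N − K)·H_HP is invertible. -/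
/-!
Let `L`, `H` be the two filters and suppose `W x = 0`. At each node `a` this reads
`(1 + K a a) (L x) a + (1 - K a a) (H x) a = 0`, and multiplying by `(L x) a + (H x) a` and summing
gives `2 ⟨L x, H x⟩ = -∑ a, ((1 + K a a) (L x) a ^ 2 + (1 - K a a) (H x) a ^ 2) ≤ 0`.
By Gershgorin, `L` and `H` are commuting positive semidefinite matrices, so
`⟨L x, H x⟩ = ⟨x, L H x⟩ ≥ 0`. Hence `L H x = 0`, `L x` vanishes at the low-pass nodes and `H x` at
the high-pass nodes. Now `L x ∈ ker H` and `H x ∈ ker L`, where `ker L = ker (1 + A / d)` and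
`ker H = ker (1 - A / d)`; by the maximum principle, elements of these kernels have constant modulus
on a connected graph. So `L x = H x = 0`, that is, `(1 + A / d) x = (1 - A / d) x = 0`, and `x = 0`.
-/

open Matrix

theorem mulVec_dotProduct_mulVec_of_isSymm {n R : Type*} [Fintype n] [CommSemiring R]
    {L : Matrix n n R} (hL : L.IsSymm) (H : Matrix n n R) (x : n → R) :
    L *ᵥ x ⬝ᵥ H *ᵥ x = x ⬝ᵥ (L * H) *ᵥ x := by
  rw [← mulVec_mulVec, dotProduct_mulVec x L, ← mulVec_transpose, hL.eq]

section SpectralTheory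

variable {n 𝕜 : Type*} [Fintype n] [RCLike 𝕜]

open scoped ComplexOrder MatrixOrder Matrix.Norms.L2Operator in
theorem posSemidef_mul_of_commute {P Q : Matrix n n 𝕜} (hP : P.PosSemidef) (hQ : Q.PosSemidef)
    (hPQ : Commute P Q) : (P * Q).PosSemidef := by
  classical
  exact (hPQ.mul_nonneg hP.nonneg hQ.nonneg).posSemidef

variable [DecidableEq n]

theorem mulVec_eq_zero_of_pow_mulVec_eq_zero {H : Matrix n n 𝕜} (hH : H.IsHermitian)
    {x : n → 𝕜} : ∀ {k : ℕ}, (H ^ k) *ᵥ x = 0 → H *ᵥ x = 0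
  | 0, h => by
    rw [pow_zero, one_mulVec] at h
    rw [h, mulVec_zero]
  | 1, h => by rwa [pow_one] at h
  | k + 2, h => by
    refine mulVec_eq_zero_of_pow_mulVec_eq_zero hH (k := k + 1) ?_
    have hsq : (Hᴴ * H) *ᵥ ((H ^ k) *ᵥ x) = 0 := by
      rw [hH.eq, mulVec_mulVec, ← pow_two, ← pow_add, add_comm, h]
    open scoped ComplexOrder in
    rwa [conjTranspose_mul_self_mulVec_eq_zero, mulVec_mulVec, ← pow_succ'] at hsq

open scoped ComplexOrder in
theorem posSemidef_one_add_of_sum_norm_le_one {C : Matrix n n 𝕜} (hC : C.IsHermitian)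
    (hsum : ∀ i, ∑ j, ‖C i j‖ ≤ 1) : (1 + C).PosSemidef := by
  have hherm : (1 + C).IsHermitian := isHermitian_one.add hC
  rw [hherm.posSemidef_iff_eigenvalues_nonneg]
  intro i
  have heig : Module.End.HasEigenvalue (toLin' (1 + C)) (hherm.eigenvalues i : 𝕜) := by
    rw [Module.End.hasEigenvalue_iff_mem_spectrum, spectrum_toLin']
    exact spectrum.algebraMap_mem 𝕜 (hherm.eigenvalues_mem_spectrum_real i)
  obtain ⟨k, hk⟩ := eigenvalue_mem_ball heig
  have hoff : ∑ j ∈ Finset.univ.erase k, ‖(1 + C) k j‖ = ∑ j ∈ Finset.univ.erase k, ‖C k j‖ :=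
    Finset.sum_congr rfl fun j hj => by simp [(Finset.ne_of_mem_erase hj).symm]
  have hrow := hsum k
  rw [← Finset.add_sum_erase _ _ (Finset.mem_univ k)] at hrow
  rw [mem_closedBall_iff_norm', hoff, Matrix.add_apply, one_apply_eq] at hk
  have hre := (RCLike.re_le_norm _).trans hk
  rw [map_sub, map_add, RCLike.one_re, RCLike.ofReal_re] at hre
  rw [Pi.zero_apply]
  linarith [(abs_le.1 (RCLike.abs_re_le_norm (C k k))).1]

end SpectralTheory

section Irreducible

variable {n R : Type*} [CommRing R] [LinearOrder R] {A : Matrix n n R}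

theorem forall_of_exists_of_isIrreducible (hA : A.IsIrreducible) {p : n → Prop}
    (hp : ∀ i j, 0 < A i j → p i → p j) (hex : ∃ i, p i) (j : n) : p j := by
  obtain ⟨i, hi⟩ := hex
  let := toQuiver A
  obtain ⟨path, -⟩ := hA.connected i j
  induction path with
  | nil => exact hi
  | cons _ edge ih => exact hp _ _ edge.down ih

theorem exists_pos_of_isIrreducible [Nonempty n] (hA : A.IsIrreducible) : ∃ i j, 0 < A i j := by
  obtain ⟨i⟩ := ‹Nonempty n›
  let := toQuiver A
  obtain ⟨path, hpath⟩ := hA.connected i i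
  cases path with
  | nil => exact absurd hpath (lt_irrefl 0)
  | cons _ edge => exact ⟨_, _, edge.down⟩

theorem map_abs_eq_self_of_nonneg [IsOrderedRing R] (hA : ∀ i j, 0 ≤ A i j) : A.map abs = A := by
  ext i j
  exact abs_of_nonneg (hA i j)

theorem isIrreducible_smul [Finite n] [IsStrictOrderedRing R] {c : R} (hc : 0 < c)
    (hA : A.IsIrreducible) : (c • A).IsIrreducible := by
  classical
  have := Fintype.ofFinite n
  have hnonneg : ∀ i j, 0 ≤ (c • A) i j := fun i j => mul_nonneg hc.le (hA.nonneg i j)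
  rw [isIrreducible_iff_exists_pow_pos hnonneg]
  intro i j
  obtain ⟨k, hk, hpos⟩ := (isIrreducible_iff_exists_pow_pos hA.nonneg).1 hA i j
  refine ⟨k, hk, ?_⟩
  rw [smul_pow]
  exact mul_pos (pow_pos hc k) hpos

end Irreducible

section MaximumPrinciple

variable {n 𝕜 : Type*} [Fintype n] [DecidableEq n] [NormedDivisionRing 𝕜] {C : Matrix n n 𝕜}
  {u : n → 𝕜}

theorem norm_eq_of_forall_norm_le_of_one_add_mulVec_eq_zero (hsum : ∀ i, ∑ j, ‖C i j‖ ≤ 1)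
    (hu : (1 + C) *ᵥ u = 0) {i j : n} (hmax : ∀ l, ‖u l‖ ≤ ‖u i‖) (hij : 0 < ‖C i j‖) :
    ‖u j‖ = ‖u i‖ := by
  have hterm : ∀ l, 0 ≤ ‖C i l‖ * (‖u i‖ - ‖u l‖) := fun l =>
    mul_nonneg (norm_nonneg _) (sub_nonneg.2 (hmax l))
  have hui : u i = -∑ l, C i l * u l := by
    have h := congrFun hu i
    rw [add_mulVec, one_mulVec] at h
    exact eq_neg_of_add_eq_zero_left h
  have hle : ‖u i‖ ≤ ∑ l, ‖C i l‖ * ‖u l‖ := by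
    conv_lhs => rw [hui, norm_neg]
    simpa only [norm_mul] using norm_sum_le Finset.univ fun l => C i l * u l
  have hdefect : ∑ l, ‖C i l‖ * (‖u i‖ - ‖u l‖) ≤ 0 := by
    simp only [mul_sub, Finset.sum_sub_distrib, ← Finset.sum_mul]
    linarith [mul_le_mul_of_nonneg_right (hsum i) (norm_nonneg (u i))]
  have hzero := (Finset.sum_eq_zero_iff_of_nonneg fun l _ => hterm l).1
    (hdefect.antisymm (Finset.sum_nonneg fun l _ => hterm l)) j (Finset.mem_univ j)
  exact (sub_eq_zero.1 ((mul_eq_zero.1 hzero).resolve_left hij.ne')).symm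

theorem eq_zero_of_one_add_mulVec_eq_zero (hsum : ∀ i, ∑ j, ‖C i j‖ ≤ 1)
    (hirr : (C.map norm).IsIrreducible) (hu : (1 + C) *ᵥ u = 0) (hex : ∃ i, u i = 0) : u = 0 := by
  obtain ⟨i₀, hi₀⟩ := hex
  obtain ⟨m, -, hm⟩ := Finset.exists_max_image Finset.univ (fun i => ‖u i‖) ⟨i₀, Finset.mem_univ i₀⟩
  have hall : ∀ i, ‖u i‖ = ‖u m‖ := forall_of_exists_of_isIrreducible hirr
    (fun i j hij hi => (norm_eq_of_forall_norm_le_of_one_add_mulVec_eq_zero hsum hu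
      (fun l => hi.symm ▸ hm l (Finset.mem_univ l)) hij).trans hi) ⟨m, rfl⟩
  funext i
  rw [Pi.zero_apply, ← norm_eq_zero, hall, ← hall i₀, hi₀, norm_zero]

end MaximumPrinciple

section Filterbank

variable {n : Type*} [Fintype n] [DecidableEq n] {K L H : Matrix n n ℝ} {x : n → ℝ}

/-- One-level filterbank with low-pass filter `L`, high-pass filter `H` and downsampling matrix `K`:
a node whose diagonal entry of `K` is `1` keeps its low-pass coefficient, one with entry `-1` its
high-pass coefficient. -/
noncomputable def filterbank (K L H : Matrix n n ℝ) : Matrix n n ℝ :=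
  (1 / 2 : ℝ) • ((1 + K) * L) + (1 / 2 : ℝ) • ((1 - K) * H)

theorem filterbank_mulVec_apply (hK : K.IsDiag) (x : n → ℝ) (a : n) :
    (filterbank K L H *ᵥ x) a =
      1 / 2 * ((1 + K a a) * (L *ᵥ x) a + (1 - K a a) * (H *ᵥ x) a) := by
  have hKmul : ∀ v : n → ℝ, (K *ᵥ v) a = K a a * v a := fun v => by
    conv_lhs => rw [← hK.diagonal_diag]
    exact mulVec_diagonal _ _ _
  simp only [filterbank, add_mulVec, sub_mulVec, smul_mulVec, one_mulVec, ← mulVec_mulVec,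
    Pi.add_apply, Pi.sub_apply, Pi.smul_apply, smul_eq_mul, hKmul]
  ring

theorem two_mul_dotProduct_of_filterbank_mulVec_eq_zero (hK : K.IsDiag)
    (hx : filterbank K L H *ᵥ x = 0) :
    2 * (L *ᵥ x ⬝ᵥ H *ᵥ x) =
      -∑ a, ((1 + K a a) * (L *ᵥ x) a ^ 2 + (1 - K a a) * (H *ᵥ x) a ^ 2) := by
  rw [dotProduct, Finset.mul_sum, ← Finset.sum_neg_distrib]
  refine Finset.sum_congr rfl fun a _ => ?_
  have ha : (filterbank K L H *ᵥ x) a = 0 := congrFun hx a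
  rw [filterbank_mulVec_apply hK] at ha
  linear_combination 2 * ((L *ᵥ x) a + (H *ᵥ x) a) * ha

theorem vanishing_of_filterbank_mulVec_eq_zero (hL : L.PosSemidef) (hH : H.PosSemidef)
    (hLH : Commute L H) (hK : K.IsDiag) (hKle : ∀ a, |K a a| ≤ 1)
    (hx : filterbank K L H *ᵥ x = 0) :
    (L * H) *ᵥ x = 0 ∧ (∀ a, K a a ≠ -1 → (L *ᵥ x) a = 0) ∧ ∀ a, K a a ≠ 1 → (H *ᵥ x) a = 0 := by
  have hlow : ∀ a, 0 ≤ (1 + K a a) * (L *ᵥ x) a ^ 2 := fun a =>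
    mul_nonneg (by linarith [(abs_le.1 (hKle a)).1]) (sq_nonneg _)
  have hhigh : ∀ a, 0 ≤ (1 - K a a) * (H *ᵥ x) a ^ 2 := fun a =>
    mul_nonneg (by linarith [(abs_le.1 (hKle a)).2]) (sq_nonneg _)
  have hsum_nonneg := Finset.sum_nonneg fun a (_ : a ∈ Finset.univ) => add_nonneg (hlow a) (hhigh a)
  have hLHpos : (L * H).PosSemidef := posSemidef_mul_of_commute hL hH hLH
  have hdot_nonneg : 0 ≤ x ⬝ᵥ (L * H) *ᵥ x := hLHpos.dotProduct_mulVec_nonneg x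
  have henergy := two_mul_dotProduct_of_filterbank_mulVec_eq_zero hK hx
  have hsymm : L.IsSymm := hL.isHermitian
  rw [mulVec_dotProduct_mulVec_of_isSymm hsymm] at henergy
  have hdot : x ⬝ᵥ (L * H) *ᵥ x = 0 := by linarith
  have hvanish : ∀ a, (1 + K a a) * (L *ᵥ x) a ^ 2 + (1 - K a a) * (H *ᵥ x) a ^ 2 = 0 := fun a =>
    (Finset.sum_eq_zero_iff_of_nonneg fun a _ => add_nonneg (hlow a) (hhigh a)).1
      (by linarith) a (Finset.mem_univ a)
  refine ⟨(hLHpos.dotProduct_mulVec_zero_iff x).1 hdot, fun a ha => ?_, fun a ha => ?_⟩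
  · have hzero : (1 + K a a) * (L *ᵥ x) a ^ 2 = 0 := by linarith [hlow a, hhigh a, hvanish a]
    exact eq_zero_of_pow_eq_zero <|
      (mul_eq_zero.1 hzero).resolve_left fun h => ha (by linarith)
  · have hzero : (1 - K a a) * (H *ᵥ x) a ^ 2 = 0 := by linarith [hlow a, hhigh a, hvanish a]
    exact eq_zero_of_pow_eq_zero <|
      (mul_eq_zero.1 hzero).resolve_left fun h => ha (by linarith)

theorem isUnit_filterbank (hL : L.PosSemidef) (hH : H.PosSemidef) (hLH : Commute L H)
    (hdisj : ∀ u, L *ᵥ u = 0 → H *ᵥ u = 0 → u = 0)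
    (hkerL : ∀ u, L *ᵥ u = 0 → (∃ a, u a = 0) → u = 0)
    (hkerH : ∀ u, H *ᵥ u = 0 → (∃ a, u a = 0) → u = 0)
    (hK : K.IsDiag) (hKle : ∀ a, |K a a| ≤ 1) (hlow : ∃ a, K a a ≠ -1) (hhigh : ∃ a, K a a ≠ 1) :
    IsUnit (filterbank K L H) := by
  rw [← mulVec_injective_iff_isUnit]
  refine (injective_iff_map_eq_zero (filterbank K L H).mulVecLin).2 fun x hx => ?_
  obtain ⟨hLHx, hLx_apply, hHx_apply⟩ :=
    vanishing_of_filterbank_mulVec_eq_zero hL hH hLH hK hKle hx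
  have hLx : L *ᵥ x = 0 :=
    hkerH _ (by rw [mulVec_mulVec, ← hLH.eq, hLHx]) (hlow.imp hLx_apply)
  have hHx : H *ᵥ x = 0 := hkerL _ (by rw [mulVec_mulVec, hLHx]) (hhigh.imp hHx_apply)
  exact hdisj x hLx hHx

end Filterbank

section HGSWT

variable {n : Type*} [Fintype n] [DecidableEq n] {A B C K : Matrix n n ℝ} {k : ℕ}

/-- HGSWT filter of order `2k`. For the normalized adjacency matrix `C = A / d` it is the low-pass
filter; the high-pass filter is obtained at `-C`. -/
noncomputable def hgswtFilter (k : ℕ) (C : Matrix n n ℝ) : Matrix n n ℝ :=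
  (1 / 2 ^ k : ℝ) • (1 + C) ^ k

theorem hgswtFilter_posSemidef (hC : C.IsSymm) (hsum : ∀ i, ∑ j, |C i j| ≤ 1) :
    (hgswtFilter k C).PosSemidef :=
  ((posSemidef_one_add_of_sum_norm_le_one hC hsum).pow k).smul (by positivity)

theorem hgswtFilter_commute (hBC : Commute B C) :
    Commute (hgswtFilter k B) (hgswtFilter k C) :=
  ((((Commute.one_left _).add_left ((Commute.one_right B).add_right hBC)).pow_pow k k).smul_left
    _).smul_right _

theorem one_add_mulVec_eq_zero_of_hgswtFilter_mulVec_eq_zero (hC : C.IsSymm) {u : n → ℝ}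
    (hu : hgswtFilter k C *ᵥ u = 0) : (1 + C) *ᵥ u = 0 := by
  rw [hgswtFilter, smul_mulVec, smul_eq_zero_iff_right (by positivity)] at hu
  exact mulVec_eq_zero_of_pow_mulVec_eq_zero (isHermitian_one.add hC) hu

theorem isUnit_filterbank_hgswtFilter (hC : C.IsSymm) (hsum : ∀ i, ∑ j, |C i j| ≤ 1)
    (hirr : (C.map abs).IsIrreducible) (hK : K.IsDiag) (hKle : ∀ a, |K a a| ≤ 1)
    (hlow : ∃ a, K a a ≠ -1) (hhigh : ∃ a, K a a ≠ 1) :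
    IsUnit (filterbank K (hgswtFilter k C) (hgswtFilter k (-C))) := by
  have hsum_neg : ∀ i, ∑ j, |(-C) i j| ≤ 1 := by simpa only [Matrix.neg_apply, abs_neg] using hsum
  have hirr_neg : ((-C).map abs).IsIrreducible := by
    have hmap : (-C).map abs = C.map abs := by
      ext i j
      exact abs_neg (C i j)
    rwa [hmap]
  have hker {u : n → ℝ} := one_add_mulVec_eq_zero_of_hgswtFilter_mulVec_eq_zero (k := k) (u := u) hC
  have hker_neg {u : n → ℝ} :=
    one_add_mulVec_eq_zero_of_hgswtFilter_mulVec_eq_zero (k := k) (u := u) hC.neg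
  refine isUnit_filterbank (hgswtFilter_posSemidef hC hsum) (hgswtFilter_posSemidef hC.neg hsum_neg)
    (hgswtFilter_commute (Commute.refl C).neg_right) (fun u hlow hhigh => ?_)
    (fun u hu => eq_zero_of_one_add_mulVec_eq_zero hsum hirr (hker hu))
    (fun u hu => eq_zero_of_one_add_mulVec_eq_zero hsum_neg hirr_neg (hker_neg hu))
    hK hKle hlow hhigh
  have htwo : (2 : ℝ) • u = (1 + C) *ᵥ u + (1 + -C) *ᵥ u := by
    rw [← add_mulVec, add_add_add_comm, add_neg_cancel, add_zero, add_mulVec, one_mulVec, two_smul]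
  rw [hker hlow, hker_neg hhigh, add_zero] at htwo
  exact (smul_eq_zero_iff_right two_ne_zero).1 htwo

theorem hgswt_filterbank_invertible_general {d : ℝ} (hA : A.IsSymm)
    (hdeg : ∀ i, ∑ j, |A i j| ≤ d) (hirr : (A.map abs).IsIrreducible) (k : ℕ)
    (hK : K.IsDiag) (hKle : ∀ a, |K a a| ≤ 1) (hlow : ∃ a, K a a ≠ -1) (hhigh : ∃ a, K a a ≠ 1) :
    IsUnit (filterbank K ((1 / 2 ^ k : ℝ) • (1 + d⁻¹ • A) ^ k)
      ((1 / 2 ^ k : ℝ) • (1 - d⁻¹ • A) ^ k)) := by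
  have hd : 0 < d := by
    have : Nonempty n := hlow.nonempty
    obtain ⟨i, j, hij⟩ := exists_pos_of_isIrreducible hirr
    exact hij.trans_le <| (Finset.single_le_sum (fun l _ => abs_nonneg (A i l))
      (Finset.mem_univ j)).trans (hdeg i)
  have habs : ∀ i j, |(d⁻¹ • A) i j| = d⁻¹ * |A i j| := fun i j => by
    rw [Matrix.smul_apply, smul_eq_mul, abs_mul, abs_of_pos (inv_pos.2 hd)]
  have hirr' : ((d⁻¹ • A).map abs).IsIrreducible := by
    have hmap : (d⁻¹ • A).map abs = d⁻¹ • A.map abs := by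
      ext i j
      exact habs i j
    rw [hmap]
    exact isIrreducible_smul (inv_pos.2 hd) hirr
  have hsum : ∀ i, ∑ j, |(d⁻¹ • A) i j| ≤ 1 := fun i => by
    simp_rw [habs, ← Finset.mul_sum]
    exact (inv_mul_le_one₀ hd).2 (hdeg i)
  rw [sub_eq_add_neg]
  exact isUnit_filterbank_hgswtFilter (hA.smul _) hsum hirr' hK hKle hlow hhigh

end HGSWT


section Circulant

theorem circulant_isIrreducible {G R : Type*} [AddGroup G] [Finite G] [Nontrivial G] [Ring R]
    [LinearOrder R] {f : G → R} (hf : ∀ v, 0 ≤ f v)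
    (hgen : AddSubgroup.closure {v | 0 < f v} = ⊤) : (circulant f).IsIrreducible := by
  let := toQuiver (circulant f)
  have edge : ∀ i v, 0 < f v → Nonempty (i ⟶ -v + i) := fun i v hv =>
    ⟨⟨by rwa [circulant_apply, sub_eq_add_neg, neg_add_rev, neg_neg, add_neg_cancel_left]⟩⟩
  have path : ∀ v i : G, Nonempty (Quiver.Path i (-v + i)) := fun v => by
    have hv : v ∈ AddSubmonoid.closure {v | 0 < f v} := by
      rw [← AddSubgroup.closure_toAddSubmonoid_of_finite, hgen]
      exact AddSubmonoid.mem_top v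
    induction hv using AddSubmonoid.closure_induction with
    | mem v hv => exact fun i => (edge i v hv).map Quiver.Hom.toPath
    | zero => exact fun i => by rw [neg_zero, zero_add]; exact ⟨.nil⟩
    | add a b _ _ iha ihb =>
      intro i
      obtain ⟨p⟩ := iha i
      obtain ⟨q⟩ := ihb (-a + i)
      rw [neg_add_rev, add_assoc]
      exact ⟨p.comp q⟩
  obtain ⟨v, hv⟩ : ∃ v, 0 < f v := by
    by_contra! hle
    have hempty : {v | 0 < f v} = ∅ := Set.eq_empty_of_forall_notMem fun v => (hle v).not_gt
    rw [hempty, AddSubgroup.closure_empty] at hgen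
    exact bot_ne_top hgen
  refine ⟨fun i j => hf (i - j), fun i j => ?_⟩
  obtain ⟨e⟩ := edge i v hv
  obtain ⟨p⟩ := path (-v + i - j) (-v + i)
  rw [neg_sub, sub_add_cancel] at p
  exact ⟨e.toPath.comp p, by simp⟩

end Circulant

section Generators

variable {G ι R : Type*} [AddGroup G] [DecidableEq G] [Semiring R] {S : Finset ι} {g : ι → G}
  {w : ι → R}

/-- First column of the circulant adjacency matrix of the weighted Cayley graph on `G` with
generators `±g s`, `s ∈ S`, of weight `w s`. -/
def generatorWeight (S : Finset ι) (g : ι → G) (w : ι → R) (v : G) : R :=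
  ∑ s ∈ S, if v = g s ∨ v = -g s then w s else 0

theorem generatorWeight_neg (v : G) : generatorWeight S g w (-v) = generatorWeight S g w v := by
  refine Finset.sum_congr rfl fun s _ => if_congr ?_ rfl rfl
  rw [neg_inj, neg_eq_iff_eq_neg, or_comm]

theorem generatorWeight_nonneg [PartialOrder R] [IsOrderedRing R] (hw : ∀ s ∈ S, 0 ≤ w s) (v : G) :
    0 ≤ generatorWeight S g w v :=
  Finset.sum_nonneg fun s hs => ite_nonneg (hw s hs) le_rfl

theorem generatorWeight_pos [PartialOrder R] [IsStrictOrderedRing R] (hw : ∀ s ∈ S, 0 < w s)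
    {s : ι} (hs : s ∈ S) : 0 < generatorWeight S g w (g s) :=
  Finset.sum_pos' (fun t ht => ite_nonneg (hw t ht).le le_rfl)
    ⟨s, hs, by rw [if_pos (Or.inl rfl)]; exact hw s hs⟩

theorem sum_generatorWeight [Fintype G] (hg : ∀ s ∈ S, g s ≠ -g s) :
    ∑ v, generatorWeight S g w v = ∑ s ∈ S, 2 * w s := by
  simp only [generatorWeight]
  rw [Finset.sum_comm]
  refine Finset.sum_congr rfl fun s hs => ?_
  have hfilter : (Finset.univ.filter fun v => v = g s ∨ v = -g s) = {g s, -g s} := by ext v; simp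
  rw [← Finset.sum_filter, hfilter, Finset.sum_pair (hg s hs), two_mul]

end Generators

section GCD

variable {G : Type*} [AddGroup G] {H : AddSubgroup G} {v : G}

theorem gcd_nsmul_mem {a b : ℕ} (ha : a • v ∈ H) (hb : b • v ∈ H) : a.gcd b • v ∈ H := by
  rw [← natCast_zsmul, Nat.gcd_eq_gcd_ab, add_zsmul, mul_comm, mul_comm (b : ℤ), mul_zsmul,
    mul_zsmul, natCast_zsmul, natCast_zsmul]
  exact H.add_mem (H.zsmul_mem ha _) (H.zsmul_mem hb _)

theorem finset_gcd_nsmul_mem {S : Finset ℕ} (hS : ∀ s ∈ S, s • v ∈ H) : S.gcd id • v ∈ H := by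
  induction S using Finset.induction_on with
  | empty => simp
  | insert s S _ ih =>
    rw [Finset.gcd_insert]
    rw [Finset.forall_mem_insert] at hS
    exact gcd_nsmul_mem hS.1 (ih hS.2)

end GCD

section CirculantGraph

open scoped Fin.CommRing

variable {N : ℕ} {S : Finset ℕ} {w : ℕ → ℝ}

theorem closure_natCast_eq_top [NeZero N] (hgcd : Nat.gcd (S.gcd id) N = 1) :
    AddSubgroup.closure ((Nat.cast : ℕ → Fin N) '' S) = ⊤ := by
  have hS : ∀ s ∈ S, s • (1 : Fin N) ∈ AddSubgroup.closure ((Nat.cast : ℕ → Fin N) '' S) :=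
    fun s hs => by
      rw [nsmul_one]
      exact AddSubgroup.subset_closure (Set.mem_image_of_mem _ hs)
  have hN : N • (1 : Fin N) ∈ AddSubgroup.closure ((Nat.cast : ℕ → Fin N) '' S) := by
    rw [nsmul_one, CharP.cast_eq_zero]
    exact zero_mem _
  have hone := gcd_nsmul_mem (finset_gcd_nsmul_mem hS) hN
  rw [hgcd, one_nsmul] at hone
  refine (AddSubgroup.eq_top_iff' _).2 fun v => ?_
  rw [← Fin.cast_val_eq_self v, ← nsmul_one]
  exact nsmul_mem hone _

theorem circAdj_eq_circulant [NeZero N] :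
    circAdj N S w = circulant (generatorWeight S (Nat.cast : ℕ → Fin N) w) := by
  have hmod : ∀ (i j : Fin N) (a : ℤ),
      ((i : ℤ) - (j : ℤ)) % (N : ℤ) = a % (N : ℤ) ↔ i - j = (a : Fin N) := fun i j a => by
    rw [← Int.ModEq, ← CharP.intCast_eq_intCast (Fin N) N]
    simp
  ext i j
  simp only [circAdj, hmod, circulant_apply, generatorWeight, Int.cast_neg, Int.cast_natCast]

theorem circAdj_isSymm : (circAdj N S w).IsSymm := by
  obtain rfl | hN := eq_or_ne N 0
  · exact Subsingleton.elim _ _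
  · have : NeZero N := ⟨hN⟩
    rw [circAdj_eq_circulant, circulant_isSymm_iff]
    exact generatorWeight_neg

theorem circAdj_isIrreducible (hN : 2 ≤ N) (hw : ∀ s ∈ S, 0 < w s)
    (hgcd : Nat.gcd (S.gcd id) N = 1) : (circAdj N S w).IsIrreducible := by
  have : NeZero N := ⟨by lia⟩
  have : Nontrivial (Fin N) := Fin.nontrivial_iff_two_le.2 hN
  rw [circAdj_eq_circulant]
  refine circulant_isIrreducible (generatorWeight_nonneg fun s hs => (hw s hs).le) ?_
  rw [eq_top_iff, ← closure_natCast_eq_top hgcd]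
  refine AddSubgroup.closure_mono ?_
  rintro _ ⟨s, hs, rfl⟩
  exact generatorWeight_pos hw hs

theorem sum_circAdj (hS : ∀ s ∈ S, 1 ≤ s ∧ 2 * s ≤ N - 1) (i : Fin N) :
    ∑ j, circAdj N S w i j = ∑ s ∈ S, 2 * w s := by
  have : NeZero N := i.neZero
  have hne : ∀ s ∈ S, (s : Fin N) ≠ -(s : Fin N) := fun s hs h => by
    rw [eq_neg_iff_add_eq_zero, ← Nat.cast_add, Fin.natCast_eq_zero] at h
    have := Nat.le_of_dvd (by linarith [hS s hs]) h
    have := hS s hs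
    lia
  rw [circAdj_eq_circulant, ← sum_generatorWeight (w := w) hne]
  exact (Equiv.subLeft i).sum_comp (generatorWeight S (Nat.cast : ℕ → Fin N) w)

end CirculantGraph

/-- the one-level HGSWT filterbank on a connected circulant graph is
invertible for any downsampling pattern, as long as at least one node retains the low-pass
component and the complementary (nonempty) set of nodes retains the high-pass components. -/
theorem hgswt_filterbank_invertible
    (N : ℕ) (S : Finset ℕ) (w : ℕ → ℝ)
    (hS : ∀ s ∈ S, 1 ≤ s ∧ 2 * s ≤ N - 1)
    (hw : ∀ s ∈ S, 0 < w s)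
    (hconn : Nat.gcd (S.gcd id) N = 1)
    (k : ℕ) (hk : 1 ≤ k)
    (A : Matrix (Fin N) (Fin N) ℝ) (hA : A = circAdj N S w)
    (HLP HHP : Matrix (Fin N) (Fin N) ℝ)
    (hHLP : HLP = (1 / 2 ^ k : ℝ) •
      ((1 : Matrix (Fin N) (Fin N) ℝ) + (∑ s ∈ S, 2 * w s)⁻¹ • A) ^ k)
    (hHHP : HHP = (1 / 2 ^ k : ℝ) •
      ((1 : Matrix (Fin N) (Fin N) ℝ) - (∑ s ∈ S, 2 * w s)⁻¹ • A) ^ k)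
    (K : Matrix (Fin N) (Fin N) ℝ)
    (hKdiag : ∀ a b : Fin N, a ≠ b → K a b = 0)
    (hKpm : ∀ a : Fin N, K a a = 1 ∨ K a a = -1)
    (hKlp : ∃ a : Fin N, K a a = 1)
    (hKhp : ∃ a : Fin N, K a a = -1)
    (W : Matrix (Fin N) (Fin N) ℝ)
    (hW : W = (1 / 2 : ℝ) • ((1 + K) * HLP) + (1 / 2 : ℝ) • ((1 - K) * HHP)) :
    IsUnit W := by
  obtain ⟨a, ha⟩ := hKlp
  obtain ⟨b, hb⟩ := hKhp
  have hab : a ≠ b := by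
    rintro rfl
    linarith
  have hN : 2 ≤ N := by
    have := Fin.val_ne_of_ne hab
    lia
  have hirr := circAdj_isIrreducible hN hw hconn
  have hdeg : ∀ i, ∑ j, |circAdj N S w i j| ≤ ∑ s ∈ S, 2 * w s := fun i => by
    simp_rw [abs_of_nonneg (hirr.nonneg _ _)]
    exact (sum_circAdj hS i).le
  have hKle : ∀ a, |K a a| ≤ 1 := fun a => ((abs_eq zero_le_one).2 (hKpm a)).le
  rw [← map_abs_eq_self_of_nonneg hirr.nonneg] at hirr
  subst hA hHLP hHHP hW
  exact hgswt_filterbank_invertible_general circAdj_isSymm hdeg hirr k (fun a b => hKdiag a b)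
    hKle ⟨a, by linarith⟩ ⟨b, by linarith⟩
end

section
/- Let A be the adjacency matrix of an undirected bipartite circulant graph on N vertices (N even, every element of the generating set S odd) with degree d per node, let H_LP = ∏_{n=1}^T (1/2^k)(β_n I + A/d)^k and H_HP = ∏_{n=1}^T (1/2^k)(β_n I − A/d)^k be HGESWT filters with β_n = d̃_{α_n}/d, and let K be the alternating downsampling matrix (K_{ii} = +1 for even i, K_{ii} = −1 for odd i). Then K·H_LP = H_HP·K, and consequently the filterbank matrix W = (1/2)(I+K)H_LP + (1/2)(I−K)H_HP satisfies Wᵀ W = (1/2)(H_LP² + H_HP²). -/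
/-!
The low-pass filter is `p(A)` and the high-pass filter is `p(-A)` for one polynomial `p`.
Every edge joins a kept vertex to a discarded one, so `K * A = -A * K`, and this propagates to
`K * p(A) = p(-A) * K`. In `Wᵀ * W` the cross terms then cancel because the two filters,
being polynomials in the same symmetric matrix, are symmetric and commute.
-/

open Polynomial Matrix

section PolynomialFilters

theorem semiconjBy_aeval {R B : Type*} [CommSemiring R] [Semiring B] [Algebra R B] {a x y : B}
    (h : SemiconjBy a x y) (p : R[X]) : SemiconjBy a (aeval x p) (aeval y p) := by
  induction p using Polynomial.induction_on' with
  | add p q hp hq => simpa only [map_add] using hp.add_right hq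
  | monomial n r =>
    simpa only [aeval_monomial, ← Algebra.smul_def] using (h.pow_right n).smul_right r

theorem commute_aeval_aeval_neg {R B : Type*} [CommRing R] [Ring B] [Algebra R B] (x : B)
    (p q : R[X]) : Commute (aeval x p) (aeval (-x) q) := by
  have hq : aeval (-x) q = aeval x (q.comp (-X)) := by rw [aeval_comp, map_neg, aeval_X]
  exact hq ▸ (Commute.all p (q.comp (-X))).map (aeval x)

theorem isSymm_aeval {V R : Type*} [Fintype V] [DecidableEq V] [CommSemiring R]
    {A : Matrix V V R} (hA : A.IsSymm) (p : R[X]) : (aeval A p).IsSymm := by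
  apply MulOpposite.op_injective
  calc MulOpposite.op (aeval A p)ᵀ
      = aeval (MulOpposite.op Aᵀ) p := (aeval_algHom_apply (transposeAlgEquiv V R R) A p).symm
    _ = MulOpposite.op (aeval A p) := by rw [hA.eq, aeval_op_apply]

/-- The HGESWT low-pass filter, as a polynomial in the adjacency matrix; `c` is the reciprocal
degree. Its value at the negated adjacency matrix is the high-pass filter. -/
noncomputable def hgeswtPolynomial {F : Type*} [Field F] {T : ℕ} (β : Fin T → F) (c : F) (k : ℕ) :
    F[X] :=
  ∏ n, (1 / 2 ^ k : F) • (β n • (1 : F[X]) + c • X) ^ k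

variable {F : Type*} [Field F] {T : ℕ}

theorem aeval_hgeswtPolynomial {B : Type*} [Semiring B] [Algebra F B] (β : Fin T → F) (c : F)
    (k : ℕ) (a : B) :
    aeval a (hgeswtPolynomial β c k) =
      ((List.finRange T).map fun n => (1 / 2 ^ k : F) • (β n • (1 : B) + c • a) ^ k).prod := by
  simp only [hgeswtPolynomial, Fin.prod_univ_def, map_list_prod, List.map_map, Function.comp_def,
    map_smul, map_pow, map_add, map_one, aeval_X]

theorem aeval_neg_hgeswtPolynomial {B : Type*} [Ring B] [Algebra F B] (β : Fin T → F) (c : F)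
    (k : ℕ) (a : B) :
    aeval (-a) (hgeswtPolynomial β c k) =
      ((List.finRange T).map fun n => (1 / 2 ^ k : F) • (β n • (1 : B) - c • a) ^ k).prod := by
  simp only [aeval_hgeswtPolynomial, smul_neg, ← sub_eq_add_neg]

end PolynomialFilters

section Filterbank

theorem filterbank_mul_of_involution {B : Type*} [Ring B] {K L H : B} (hK : K * K = 1)
    (hLH : Commute L H) (hKL : SemiconjBy K L H) :
    (L * (1 + K) + H * (1 - K)) * ((1 + K) * L + (1 - K) * H) = 2 * (L * L + H * H) := by
  have hplus : (1 + K) * (1 + K) = 2 * (1 + K) := by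
    rw [mul_add, add_mul 1 K K, hK]
    noncomm_ring
  have hminus : (1 - K) * (1 - K) = 2 * (1 - K) := by
    rw [mul_sub, sub_mul 1 K K, hK]
    noncomm_ring
  have hplus_minus : (1 + K) * (1 - K) = 0 := by
    rw [mul_sub, add_mul 1 K K, hK]
    noncomm_ring
  have hminus_plus : (1 - K) * (1 + K) = 0 := by
    rw [mul_add, sub_mul 1 K K, hK]
    noncomm_ring
  have hKH : K * H = L * K := by
    calc K * H = K * (H * K) * K := by rw [mul_assoc, mul_assoc, hK, mul_one]
      _ = L * K := by rw [← hKL.eq, ← mul_assoc, hK, one_mul]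
  have hcross : L * (K * L) = H * (K * H) := by
    rw [hKL.eq, hKH, ← mul_assoc, ← mul_assoc, hLH.eq]
  calc (L * (1 + K) + H * (1 - K)) * ((1 + K) * L + (1 - K) * H)
      = L * ((1 + K) * (1 + K)) * L + L * ((1 + K) * (1 - K)) * H
          + H * ((1 - K) * (1 + K)) * L + H * ((1 - K) * (1 - K)) * H := by noncomm_ring
    _ = 2 * (L * L + H * H) + 2 * (L * (K * L) - H * (K * H)) := by
      rw [hplus, hplus_minus, hminus_plus, hminus]
      noncomm_ring
    _ = 2 * (L * L + H * H) := by rw [hcross, sub_self, mul_zero, add_zero]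

variable {V F : Type*} [Fintype V] [DecidableEq V] [Field F]

/-- The one-level filterbank matrix `W` with low-pass filter `L`, high-pass filter `H` and
downsampling matrix `K`, whose diagonal is `1` on the vertices keeping the low-pass output. -/
def filterbankMatrix (K L H : Matrix V V F) : Matrix V V F :=
  (1 / 2 : F) • ((1 + K) * L) + (1 / 2 : F) • ((1 - K) * H)

theorem filterbankMatrix_transpose_mul_self [NeZero (2 : F)] {K L H : Matrix V V F}
    (hK : K.IsSymm) (hKK : K * K = 1) (hL : L.IsSymm) (hH : H.IsSymm) (hLH : Commute L H)
    (hKL : SemiconjBy K L H) :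
    (filterbankMatrix K L H)ᵀ * filterbankMatrix K L H = (1 / 2 : F) • (L * L + H * H) := by
  have htwo : (2 : Matrix V V F) = (2 : F) • 1 := by rw [two_smul, one_add_one_eq_two]
  have hscalar : (1 / 2 * (1 / 2) * 2 : F) = 1 / 2 := by
    rw [mul_assoc, one_div_mul_cancel two_ne_zero, mul_one]
  calc (filterbankMatrix K L H)ᵀ * filterbankMatrix K L H
      = (1 / 2 * (1 / 2) : F) •
          ((L * (1 + K) + H * (1 - K)) * ((1 + K) * L + (1 - K) * H)) := by
        simp only [filterbankMatrix, ← smul_add, transpose_smul, transpose_add, transpose_sub,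
          transpose_mul, transpose_one, hK.eq, hL.eq, hH.eq, smul_mul_smul_comm]
    _ = (1 / 2 : F) • (L * L + H * H) := by
        rw [filterbank_mul_of_involution hKK hLH hKL, htwo, smul_one_mul, smul_smul, hscalar]

end Filterbank

section BipartiteDownsampling

variable {V : Type*} [DecidableEq V]

/-- The diagonal sign matrix `K` of a downsampling pattern: `1` on the kept vertices and `-1` on
the discarded ones. -/
def downsamplingMatrix (R : Type*) [Ring R] (keep : V → Prop) [DecidablePred keep] :
    Matrix V V R :=
  diagonal fun i => if keep i then 1 else -1

variable {R : Type*} [Ring R] (keep : V → Prop) [DecidablePred keep]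

theorem isSymm_downsamplingMatrix : (downsamplingMatrix R keep).IsSymm :=
  isSymm_diagonal _

variable [Fintype V]

theorem downsamplingMatrix_mul_self :
    downsamplingMatrix R keep * downsamplingMatrix R keep = 1 := by
  rw [downsamplingMatrix, diagonal_mul_diagonal, ← diagonal_one]
  congr 1 with i
  split_ifs <;> simp

theorem semiconjBy_downsamplingMatrix_neg {A : Matrix V V R}
    (hbip : ∀ i j, A i j ≠ 0 → (keep i ↔ ¬ keep j)) :
    SemiconjBy (downsamplingMatrix R keep) A (-A) := by
  ext i j
  rw [downsamplingMatrix, diagonal_mul, mul_diagonal, neg_apply]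
  by_cases hij : A i j = 0
  · simp [hij]
  · by_cases hj : keep j <;> simp [hbip i j hij, hj]

end BipartiteDownsampling

section Circulant

variable {N : ℕ} {S : Finset ℕ}

theorem isSymm_circAdj (w : ℕ → ℝ) : (circAdj N S w).IsSymm := by
  have neg_modEq_iff (a b : ℤ) : -a ≡ b [ZMOD N] ↔ a ≡ -b [ZMOD N] := by
    constructor <;> intro h <;> simpa only [neg_neg] using h.neg
  refine IsSymm.ext fun i j => Finset.sum_congr rfl fun s _ => if_congr ?_ rfl rfl
  have hpos := neg_modEq_iff ((i : ℤ) - j) s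
  have hneg := neg_modEq_iff ((i : ℤ) - j) (-s)
  rw [neg_sub] at hpos hneg
  rw [neg_neg] at hneg
  exact (or_congr hpos hneg).trans or_comm

theorem exists_modEq_of_circAdj_ne_zero {w : ℕ → ℝ} {i j : Fin N} (h : circAdj N S w i j ≠ 0) :
    ∃ s ∈ S, (i : ℤ) - j ≡ s [ZMOD N] ∨ (i : ℤ) - j ≡ -s [ZMOD N] := by
  obtain ⟨s, hs, hsij⟩ := Finset.exists_ne_zero_of_sum_ne_zero h
  exact ⟨s, hs, (ite_ne_right_iff.mp hsij).1⟩

theorem even_iff_not_even_of_circAdj_ne_zero (hN : Even N) (hodd : ∀ s ∈ S, Odd s) {w : ℕ → ℝ}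
    {i j : Fin N} (h : circAdj N S w i j ≠ 0) : Even (i : ℕ) ↔ ¬ Even (j : ℕ) := by
  obtain ⟨s, hs, hsij⟩ := exists_modEq_of_circAdj_ne_zero h
  have hs_odd : Odd (s : ℤ) := (Int.odd_coe_nat s).mpr (hodd s hs)
  have h2N : (2 : ℤ) ∣ N := by exact_mod_cast hN.two_dvd
  have odd_of_modEq {t : ℤ} (ht : Odd t) (hij : (i : ℤ) - j ≡ t [ZMOD N]) : Odd ((i : ℤ) - j) :=
    Int.odd_iff.mpr ((hij.of_dvd h2N).eq.trans (Int.odd_iff.mp ht))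
  have hdiff : Odd ((i : ℤ) - j) := hsij.elim (odd_of_modEq hs_odd) (odd_of_modEq hs_odd.neg)
  rw [Int.odd_sub, Int.odd_coe_nat, Int.even_coe_nat, ← Nat.not_even_iff_odd] at hdiff
  exact (not_iff_comm.mp hdiff).symm

end Circulant

theorem hgeswt_bipartite_alternating_commutation_general {V F : Type*} [Fintype V]
    [DecidableEq V] [Field F] [NeZero (2 : F)] {A : Matrix V V F} (hA : A.IsSymm)
    (keep : V → Prop) [DecidablePred keep] (hbip : ∀ i j, A i j ≠ 0 → (keep i ↔ ¬ keep j))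
    (p : F[X]) {K L H W : Matrix V V F} (hK : K = downsamplingMatrix F keep)
    (hL : L = aeval A p) (hH : H = aeval (-A) p) (hW : W = filterbankMatrix K L H) :
    K * L = H * K ∧ Wᵀ * W = (1 / 2 : F) • (L * L + H * H) := by
  subst hK hL hH hW
  have hKL : SemiconjBy (downsamplingMatrix F keep) (aeval A p) (aeval (-A) p) :=
    semiconjBy_aeval (semiconjBy_downsamplingMatrix_neg keep hbip) p
  exact ⟨hKL.eq, filterbankMatrix_transpose_mul_self (isSymm_downsamplingMatrix keep)
    (downsamplingMatrix_mul_self keep) (isSymm_aeval hA p) (isSymm_aeval hA.neg p)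
    (commute_aeval_aeval_neg A p p) hKL⟩

/-- for a bipartite circulant graph with the alternating downsampling matrix
`K`, one has `K·H_LP = H_HP·K` and `Wᵀ W = (1/2)(H_LP² + H_HP²)`. -/
theorem hgeswt_bipartite_alternating_commutation
    (N : ℕ) (hNe : Even N) (S : Finset ℕ) (w : ℕ → ℝ)
    (hS : ∀ s ∈ S, 1 ≤ s ∧ 2 * s ≤ N - 1)
    (hw : ∀ s ∈ S, 0 < w s)
    (hodd : ∀ s ∈ S, Odd s)
    (T : ℕ) (α : Fin T → ℝ)
    (β : Fin T → ℝ)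
    (hβ : ∀ n : Fin T, β n =
      (∑ s ∈ S, 2 * w s * Real.cos (α n * s)) / (∑ s ∈ S, 2 * w s))
    (k : ℕ) (hk : 1 ≤ k)
    (A : Matrix (Fin N) (Fin N) ℝ) (hA : A = circAdj N S w)
    (HLP HHP : Matrix (Fin N) (Fin N) ℝ)
    (hHLP : HLP = ((List.finRange T).map (fun n =>
      (1 / 2 ^ k : ℝ) • (β n • (1 : Matrix (Fin N) (Fin N) ℝ)
        + (∑ s ∈ S, 2 * w s)⁻¹ • A) ^ k)).prod)
    (hHHP : HHP = ((List.finRange T).map (fun n =>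
      (1 / 2 ^ k : ℝ) • (β n • (1 : Matrix (Fin N) (Fin N) ℝ)
        - (∑ s ∈ S, 2 * w s)⁻¹ • A) ^ k)).prod)
    (K : Matrix (Fin N) (Fin N) ℝ)
    (hK : K = Matrix.diagonal (fun i : Fin N => if Even (i : ℕ) then (1 : ℝ) else -1))
    (W : Matrix (Fin N) (Fin N) ℝ)
    (hW : W = (1 / 2 : ℝ) • ((1 + K) * HLP) + (1 / 2 : ℝ) • ((1 - K) * HHP)) :
    K * HLP = HHP * K ∧
      W.transpose * W = (1 / 2 : ℝ) • (HLP * HLP + HHP * HHP) := by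
  subst hA
  exact hgeswt_bipartite_alternating_commutation_general (isSymm_circAdj w) _
    (fun _ _ => even_iff_not_even_of_circAdj_ne_zero hNe hodd) (hgeswtPolynomial β _ k) hK
    (hHLP.trans (aeval_hgeswtPolynomial ..).symm) (hHHP.trans (aeval_neg_hgeswtPolynomial ..).symm)
    hW
end

section
/- Let N be even and let A ∈ ℝ^{N×N} be the adjacency matrix of an undirected circulant graph with generating set S, positive weights (d_s)_{s∈S}, and bandwidth B satisfying 2B < N/2, with DFT-ordered eigenvalues λ_j = Σ_{s∈S} 2d_s cos(2πjs/N), j = 0,…,N−1. Let Ũ^H ∈ ℂ^{(N/2)×(N/2)} be the unnormalized DFT matrix of dimension N/2, (Ũ^H)_{j,m} = e^{−2πi·jm/(N/2)}, obtained by downsampling the first N/2 rows of the N-dimensional DFT at even columns, and let Λ̃ = diag(λ_0, λ_2, λ_4, …, λ_{N−2}) be the even-indexed eigenvalues. Then the matrix Ã = (2/N)·Ũ·Λ̃·Ũ^H ∈ ℝ^{(N/2)×(N/2)} is the symmetric circulant adjacency matrix of the circulant graph on N/2 vertices with the same generating set S and the same weights (d_s)_{s∈S}: Ã_{m,n} =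 d_s if m−n ≡ ±s (mod N/2) for some s ∈ S, and Ã_{m,n} = 0 otherwise. -/
/-! By Fourier inversion on `ℤ/K`, the circulant matrix with first column `Φ` is
`K⁻¹ • (Uᴴ * diagonal (𝓕 Φ) * U)`, where `U` is the DFT matrix of order `K`. The angle `2π(qj)s/N`
in the eigenvalue `λ_{qj}` equals `2πjs/(N/q)`, so keeping every `q`-th eigenvalue of a circulant
graph on `N` vertices gives exactly the spectrum, in DFT ordering, of the circulant graph on `N/q`
vertices with the same generating set and weights. -/

section DFTMatrix

open ZMod Matrix

/-- The unnormalized discrete Fourier transform matrix of order `K`. Its indices are in `Fin K`,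
rather than `ZMod K`, so that the entries are explicit exponentials of natural numbers. -/
noncomputable def dftMatrix (K : ℕ) : Matrix (Fin K) (Fin K) ℂ :=
  Matrix.of fun j m => Complex.exp (-2 * (Real.pi : ℂ) * Complex.I * (j : ℕ) * (m : ℕ) / K)

variable {K : ℕ} [NeZero K]

theorem dftMatrix_apply_eq_stdAddChar (j m : Fin K) :
    dftMatrix K j m = stdAddChar (-(((j : ℕ) : ZMod K) * ((m : ℕ) : ZMod K))) := by
  have hcast : -(((j : ℕ) : ZMod K) * ((m : ℕ) : ZMod K)) =
      ((-((j : ℕ) * (m : ℕ)) : ℤ) : ZMod K) := by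
    push_cast
    rfl
  rw [hcast, stdAddChar_coe, dftMatrix, Matrix.of_apply]
  push_cast
  ring_nf

theorem star_dftMatrix_mul_dftMatrix (j m n : Fin K) :
    star (dftMatrix K j m) * dftMatrix K j n =
      stdAddChar (((j : ℕ) : ZMod K) * (((m : ℕ) : ZMod K) - ((n : ℕ) : ZMod K))) := by
  rw [dftMatrix_apply_eq_stdAddChar, dftMatrix_apply_eq_stdAddChar, ← starRingEnd_apply,
    ← AddChar.map_neg_eq_conj, ← AddChar.map_add_eq_mul]
  congr 1
  ring

theorem sum_fin_natCast_zmod {E : Type*} [AddCommMonoid E] (f : ZMod K → E) :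
    ∑ j : Fin K, f ((j : ℕ) : ZMod K) = ∑ a, f a := by
  have hinj : Function.Injective fun j : Fin K => ((j : ℕ) : ZMod K) := fun i j hij => by
    simpa only [val_cast_of_lt i.isLt, val_cast_of_lt j.isLt, Fin.val_inj] using
      congrArg ZMod.val hij
  have hbij := (Fintype.bijective_iff_injective_and_card _).mpr ⟨hinj, by simp [ZMod.card]⟩
  exact hbij.sum_comp f

theorem circulant_spectral_decomposition (Φ : ZMod K → ℂ) :
    (K : ℂ)⁻¹ • ((dftMatrix K)ᴴ * diagonal (fun j : Fin K => 𝓕 Φ ((j : ℕ) : ZMod K)) *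
        dftMatrix K) =
      (circulant Φ).submatrix (fun m : Fin K => ((m : ℕ) : ZMod K))
        (fun n : Fin K => ((n : ℕ) : ZMod K)) := by
  ext m n
  set d : ZMod K := ((m : ℕ) : ZMod K) - ((n : ℕ) : ZMod K) with hd
  calc (K : ℂ)⁻¹ * ((dftMatrix K)ᴴ * diagonal (fun j : Fin K => 𝓕 Φ ((j : ℕ) : ZMod K)) *
          dftMatrix K) m n
      = (K : ℂ)⁻¹ * ∑ j : Fin K,
          stdAddChar (((j : ℕ) : ZMod K) * d) * 𝓕 Φ ((j : ℕ) : ZMod K) := by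
        rw [mul_apply]
        simp only [mul_diagonal, conjTranspose_apply, mul_right_comm,
          star_dftMatrix_mul_dftMatrix, hd]
    _ = 𝓕⁻ (𝓕 Φ) d := by
        rw [sum_fin_natCast_zmod fun a => stdAddChar (a * d) * 𝓕 Φ a, invDFT_apply]
        rfl
    _ = Φ d := by rw [LinearEquiv.symm_apply_apply]

theorem dft_single (a k : ZMod K) (c : ℂ) : 𝓕 (Pi.single a c) k = stdAddChar (-(a * k)) * c := by
  simp [dft_apply, Pi.single_apply]

end DFTMatrix

section CirculantGraph

open ZMod

/-- The first column of the adjacency matrix of the circulant graph on `ZMod K` with generating set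
`S` and weights `w`. If `s = -s` in `ZMod K`, the two contributions of `s` add up. -/
def connectionVector {R : Type*} [AddCommMonoid R] (K : ℕ) (S : Finset ℕ) (w : ℕ → R) :
    ZMod K → R :=
  ∑ s ∈ S, (Pi.single (s : ZMod K) (w s) + Pi.single (-(s : ZMod K)) (w s))

/-- The `j`-th eigenvalue, in DFT ordering, of the circulant graph on `N` vertices with generating
set `S` and weights `w`. -/
noncomputable def circulantEigenvalue (N : ℕ) (S : Finset ℕ) (w : ℕ → ℂ) (j : ℕ) : ℂ :=
  ∑ s ∈ S, 2 * w s * Complex.cos (2 * Real.pi * j * s / N)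

theorem circulantEigenvalue_mul_left {q N : ℕ} (hq : q ∣ N) (hN : N ≠ 0) (S : Finset ℕ) (w : ℕ → ℂ)
    (j : ℕ) : circulantEigenvalue N S w (q * j) = circulantEigenvalue (N / q) S w j := by
  have hN' : (N : ℂ) ≠ 0 := Nat.cast_ne_zero.mpr hN
  have hq' : (q : ℂ) ≠ 0 := Nat.cast_ne_zero.mpr (ne_zero_of_dvd_ne_zero hN hq)
  unfold circulantEigenvalue
  rw [Nat.cast_div hq hq']
  refine Finset.sum_congr rfl fun s _ => ?_
  congr 2
  push_cast
  field_simp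

theorem dft_connectionVector {K : ℕ} [NeZero K] (S : Finset ℕ) (w : ℕ → ℂ) (j : ℕ) :
    𝓕 (connectionVector K S w) (j : ZMod K) = circulantEigenvalue K S w j := by
  have hchar (k : ℤ) : stdAddChar (k * j : ZMod K) =
      Complex.exp (2 * Real.pi * j * k / K * Complex.I) := by
    rw [show (k * j : ZMod K) = ((k * j : ℤ) : ZMod K) by push_cast; rfl, stdAddChar_coe]
    push_cast
    ring_nf
  simp only [connectionVector, circulantEigenvalue, map_sum, map_add, Finset.sum_apply,
    Pi.add_apply, dft_single]
  refine Finset.sum_congr rfl fun s _ => ?_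
  have hpos : stdAddChar (s * j : ZMod K) =
      Complex.exp (2 * Real.pi * j * s / K * Complex.I) := by
    simpa only [Int.cast_natCast] using hchar s
  have hneg : stdAddChar (-(s * j) : ZMod K) =
      Complex.exp (-(2 * Real.pi * j * s / K) * Complex.I) := by
    simpa only [Int.cast_neg, Int.cast_natCast, neg_mul, mul_neg, neg_div] using hchar (-s)
  rw [neg_mul, neg_neg, hpos, hneg, mul_right_comm 2 (w s), Complex.two_cos]
  ring

theorem connectionVector_intCast_apply {R : Type*} [AddCommMonoid R] {K : ℕ} {S : Finset ℕ}
    (hS : ∀ s ∈ S, ¬ K ∣ 2 * s) (w : ℕ → R) (a : ℤ) :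
    connectionVector K S w (a : ZMod K) =
      ∑ s ∈ S, if a % K = s % K ∨ a % K = -s % K then w s else 0 := by
  rw [connectionVector, Finset.sum_apply]
  refine Finset.sum_congr rfl fun s hs => ?_
  have hne : (s : ZMod K) ≠ -s := fun h => hS s hs <| by
    rw [← natCast_eq_zero_iff]
    push_cast
    rw [two_mul, ← eq_neg_iff_add_eq_zero]
    exact h
  have hpos : (a : ZMod K) = s ↔ a % K = s % K := by
    simpa only [Int.cast_natCast] using intCast_eq_intCast_iff' a s K
  have hneg : (a : ZMod K) = -s ↔ a % K = -s % K := by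
    simpa only [Int.cast_neg, Int.cast_natCast] using intCast_eq_intCast_iff' a (-s) K
  simp only [← hpos, ← hneg, Pi.add_apply, Pi.single_apply]
  rcases eq_or_ne (a : ZMod K) s with has | has
  · simp [has, hne]
  · simp [has]

theorem downsampled_spectral_decomposition {q N : ℕ} (hq : q ∣ N) (hN : N ≠ 0)
    (S : Finset ℕ) (w : ℕ → ℂ) :
    ((q : ℂ) / N) • ((dftMatrix (N / q)).conjTranspose *
        Matrix.diagonal (fun j : Fin (N / q) => circulantEigenvalue N S w (q * (j : ℕ))) *
        dftMatrix (N / q)) =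
      (Matrix.circulant (connectionVector (N / q) S w)).submatrix
        (fun m : Fin (N / q) => ((m : ℕ) : ZMod (N / q)))
        (fun n : Fin (N / q) => ((n : ℕ) : ZMod (N / q))) := by
  have hq0 : q ≠ 0 := ne_zero_of_dvd_ne_zero hN hq
  have : NeZero (N / q) := ⟨Nat.div_ne_zero_iff_of_dvd hq |>.mpr ⟨hN, hq0⟩⟩
  have hscale : (q : ℂ) / N = ((N / q : ℕ) : ℂ)⁻¹ := by
    rw [Nat.cast_div hq (Nat.cast_ne_zero.mpr hq0), inv_div]
  simp only [hscale, circulantEigenvalue_mul_left hq hN, ← dft_connectionVector]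
  exact circulant_spectral_decomposition _

theorem circulant_spectral_coarsening_general {q N : ℕ} (hq : q ∣ N) {S : Finset ℕ}
    (hS : ∀ s ∈ S, ¬ N / q ∣ 2 * s) (w : ℕ → ℂ) (m n : Fin (N / q)) :
    (((q : ℂ) / N) • ((dftMatrix (N / q)).conjTranspose *
        Matrix.diagonal (fun j : Fin (N / q) => circulantEigenvalue N S w (q * (j : ℕ))) *
        dftMatrix (N / q))) m n =
      ∑ s ∈ S,
        if ((m : ℤ) - (n : ℤ)) % ((N / q : ℕ) : ℤ) = (s : ℤ) % ((N / q : ℕ) : ℤ) ∨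
           ((m : ℤ) - (n : ℤ)) % ((N / q : ℕ) : ℤ) = (-(s : ℤ)) % ((N / q : ℕ) : ℤ)
        then w s else 0 := by
  have hN : N ≠ 0 := (m.pos.trans_le (Nat.div_le_self N q)).ne'
  rw [downsampled_spectral_decomposition hq hN,
    ← connectionVector_intCast_apply hS, Matrix.submatrix_apply, Matrix.circulant_apply]
  push_cast
  rfl

end CirculantGraph

/-- spectral downsampling of a circulant graph (keeping the first `N/2` DFT
rows sampled at even columns and the even-indexed eigenvalues) yields the circulant
adjacency matrix on `N/2` vertices with the same generating set and weights. -/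
theorem circulant_spectral_coarsening
    (N : ℕ) (hNe : Even N) (hNpos : 0 < N) (S : Finset ℕ) (w : ℕ → ℝ)
    (hS : ∀ s ∈ S, 1 ≤ s ∧ 2 * s ≤ N - 1)
    (hw : ∀ s ∈ S, 0 < w s)
    (B : ℕ) (hBS : B ∈ S) (hBmax : ∀ s ∈ S, s ≤ B) (hB : 2 * B < N / 2)
    (lam : ℕ → ℝ)
    (hlam : ∀ j : ℕ, lam j = ∑ s ∈ S, 2 * w s * Real.cos (2 * Real.pi * j * s / N))
    (UH : Matrix (Fin (N / 2)) (Fin (N / 2)) ℂ)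
    (hUH : ∀ j m : Fin (N / 2), UH j m =
      Complex.exp (-2 * (Real.pi : ℂ) * Complex.I * ((j : ℕ) : ℂ) * ((m : ℕ) : ℂ) /
        ((N / 2 : ℕ) : ℂ)))
    (Lam : Matrix (Fin (N / 2)) (Fin (N / 2)) ℂ)
    (hLam : Lam = Matrix.diagonal (fun j : Fin (N / 2) => ((lam (2 * (j : ℕ)) : ℝ) : ℂ)))
    (Atil : Matrix (Fin (N / 2)) (Fin (N / 2)) ℂ)
    (hAtil : Atil = ((2 : ℂ) / (N : ℂ)) • (UH.conjTranspose * Lam * UH)) :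
    ∀ m n : Fin (N / 2), Atil m n =
      ∑ s ∈ S,
        if ((m : ℤ) - (n : ℤ)) % ((N / 2 : ℕ) : ℤ) = (s : ℤ) % ((N / 2 : ℕ) : ℤ) ∨
           ((m : ℤ) - (n : ℤ)) % ((N / 2 : ℕ) : ℤ) = (-(s : ℤ)) % ((N / 2 : ℕ) : ℤ)
        then ((w s : ℝ) : ℂ) else 0 := by
  have hS' : ∀ s ∈ S, ¬ N / 2 ∣ 2 * s := fun s hs =>
    Nat.not_dvd_of_pos_of_lt (Nat.mul_pos two_pos (hS s hs).1)
      ((Nat.mul_le_mul_left 2 (hBmax s hs)).trans_lt hB)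
  obtain rfl : UH = dftMatrix (N / 2) := Matrix.ext hUH
  simpa [hAtil, hLam, hlam, circulantEigenvalue] using
    circulant_spectral_coarsening_general hNe.two_dvd hS' (fun s => (w s : ℂ))
end
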